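/- For every δ > 0, ω > 0 and t₀ ∈ ℝ, the function t ↦ sin(ω(t + t₀))·(x_h(t) − x_h(t)²)·x_h'(t) is integrable on ℝ and ∫_{−∞}^{∞} sin(ω(t + t₀))·(x_h(t) − x_h(t)²)·x_h'(t) dt = (3π/5)·ω²·(δ² − ω⁴)·cos(ω t₀)/(δ³·sinh(πω/√δ)). -/

import Mathlib

open MeasureTheory

/-!
In the time `s = √δ t` the homoclinic profile is `X = 1 - 6 ℓ`, where `ℓ = σ'` is the logistic
density (`σ` the sigmoid), and `(X - X²) X'` is the derivative of `72 ℓ³ - 18 ℓ²`. An integration by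
parts reduces the claim to the Fourier transforms of `ℓ²` and `ℓ³`. The substitution `p = σ(s)`
turns the Laplace transform of `ℓⁿ` at `z` into the Beta integral `B(n + z, n - z)`, which the
reflection formula for `Γ` evaluates.
-/

section BetaIntegral

lemma sigmoid_deriv_smul_beta_integrand (u v : ℂ) (s : ℝ) :
    |Real.sigmoid s * (1 - Real.sigmoid s)| •
        ((Real.sigmoid s : ℂ) ^ (u - 1) * (1 - (Real.sigmoid s : ℂ)) ^ (v - 1)) =
      (Real.sigmoid s : ℂ) ^ u * (Real.sigmoid (-s) : ℂ) ^ v := by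
  have hpos := Real.sigmoid_pos s
  have hneg := Real.sigmoid_pos (-s)
  have hpos_ne : (Real.sigmoid s : ℂ) ≠ 0 := by exact_mod_cast hpos.ne'
  have hneg_ne : (Real.sigmoid (-s) : ℂ) ≠ 0 := by exact_mod_cast hneg.ne'
  have hsub : 1 - (Real.sigmoid s : ℂ) = (Real.sigmoid (-s) : ℂ) := by
    rw [Real.sigmoid_neg]
    push_cast
    rfl
  rw [hsub, ← Real.sigmoid_neg, abs_of_pos (mul_pos hpos hneg), Complex.real_smul,
    Complex.cpow_sub _ _ hpos_ne, Complex.cpow_sub _ _ hneg_ne, Complex.cpow_one, Complex.cpow_one]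
  push_cast
  field_simp

lemma integrable_sigmoid_cpow_mul_sigmoid_neg_cpow {u v : ℂ} (hu : 0 < u.re)
    (hv : 0 < v.re) :
    Integrable fun s : ℝ => (Real.sigmoid s : ℂ) ^ u * (Real.sigmoid (-s) : ℂ) ^ v := by
  have hbeta := Complex.betaIntegral_convergent hu hv
  rw [intervalIntegrable_iff_integrableOn_Ioo_of_le zero_le_one, ← Real.range_sigmoid,
    ← Set.image_univ, integrableOn_image_iff_integrableOn_abs_deriv_smul MeasurableSet.univ
      (fun s _ => (Real.hasDerivAt_sigmoid s).hasDerivWithinAt)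
      Real.sigmoid_injective.injOn, integrableOn_univ] at hbeta
  simpa only [sigmoid_deriv_smul_beta_integrand] using hbeta

lemma integral_sigmoid_cpow_mul_sigmoid_neg_cpow (u v : ℂ) :
    ∫ s : ℝ, (Real.sigmoid s : ℂ) ^ u * (Real.sigmoid (-s) : ℂ) ^ v =
      Complex.betaIntegral u v := by
  rw [Complex.betaIntegral, intervalIntegral.integral_of_le zero_le_one,
    integral_Ioc_eq_integral_Ioo, ← Real.range_sigmoid, ← Set.image_univ,
    integral_image_eq_integral_abs_deriv_smul MeasurableSet.univ
      (fun s _ => (Real.hasDerivAt_sigmoid s).hasDerivWithinAt)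
      Real.sigmoid_injective.injOn, Measure.restrict_univ]
  simp only [sigmoid_deriv_smul_beta_integrand]

end BetaIntegral

section Reflection

open Complex (betaIntegral)
open scoped Nat Real

variable {z : ℂ}

lemma natCast_add_ne_zero_of_sin_pi_mul_ne_zero (hz : Complex.sin (π * z) ≠ 0) (n : ℕ) :
    (n : ℂ) + z ≠ 0 := by
  intro h
  apply hz
  rw [eq_neg_of_add_eq_zero_right h, mul_neg, Complex.sin_neg, mul_comm, Complex.sin_nat_mul_pi,
    neg_zero]

lemma Gamma_add_mul_Gamma_sub_eq_prod (hz : Complex.sin (π * z) ≠ 0) (n : ℕ) :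
    Complex.Gamma (n + 1 + z) * Complex.Gamma (n + 1 - z) =
      (∏ k ∈ Finset.range n, (((k : ℂ) + 1) ^ 2 - z ^ 2)) * (π * z / Complex.sin (π * z)) := by
  have hz_neg : Complex.sin (π * -z) ≠ 0 := by
    rwa [mul_neg, Complex.sin_neg, neg_ne_zero]
  induction n with
  | zero =>
    have hz0 : z ≠ 0 := by simpa using natCast_add_ne_zero_of_sin_pi_mul_ne_zero hz 0
    rw [Nat.cast_zero, zero_add, add_comm 1 z, Complex.Gamma_add_one z hz0, mul_assoc,
      Complex.Gamma_mul_Gamma_one_sub, Finset.prod_range_zero]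
    ring
  | succ n ih =>
    have hplus := natCast_add_ne_zero_of_sin_pi_mul_ne_zero hz (n + 1)
    have hminus := natCast_add_ne_zero_of_sin_pi_mul_ne_zero hz_neg (n + 1)
    rw [← sub_eq_add_neg] at hminus
    push_cast at hplus hminus ⊢
    rw [add_right_comm, add_sub_right_comm, Complex.Gamma_add_one _ hplus,
      Complex.Gamma_add_one _ hminus, Finset.prod_range_succ]
    linear_combination (((n : ℂ) + 1) ^ 2 - z ^ 2) * ih

lemma betaIntegral_add_sub_eq_prod {n : ℕ} (hre : |z.re| < n + 1)
    (hz : Complex.sin (π * z) ≠ 0) :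
    betaIntegral (n + 1 + z) (n + 1 - z) =
      (∏ k ∈ Finset.range n, (((k : ℂ) + 1) ^ 2 - z ^ 2)) / (2 * n + 1)! *
        (π * z / Complex.sin (π * z)) := by
  obtain ⟨hleft, hright⟩ := abs_lt.1 hre
  have hsum : (n + 1 + z) + (n + 1 - z) = ((2 * n + 1 : ℕ) : ℂ) + 1 := by
    push_cast
    ring
  rw [Complex.betaIntegral_eq_Gamma_mul_div _ _ (by simp; linarith) (by simp; linarith),
    hsum, Complex.Gamma_nat_eq_factorial, Gamma_add_mul_Gamma_sub_eq_prod hz]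
  ring

end Reflection

section LogisticDensity

open scoped Nat Real

/-- The density of the standard logistic distribution, i.e. the derivative of the sigmoid. It is
`sech² (s / 2) / 4`, the shape of the homoclinic pulse. -/
noncomputable def logisticDensity (s : ℝ) : ℝ := Real.sigmoid s * Real.sigmoid (-s)

lemma logisticDensity_eq_inv_cosh (s : ℝ) :
    logisticDensity s = 1 / (2 * (1 + Real.cosh s)) := by
  rw [logisticDensity, Real.sigmoid_def, Real.sigmoid_def, neg_neg, Real.cosh_eq, Real.exp_neg]
  have := Real.exp_pos s
  field_simp
  ring

lemma hasDerivAt_logisticDensity (s : ℝ) :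
    HasDerivAt logisticDensity (logisticDensity s * (1 - 2 * Real.sigmoid s)) s := by
  have hsigmoid := Real.hasDerivAt_sigmoid s
  have hdensity : logisticDensity = fun s => Real.sigmoid s * (1 - Real.sigmoid s) := by
    funext s
    rw [logisticDensity, Real.sigmoid_neg]
  rw [hdensity]
  exact (hsigmoid.mul (hsigmoid.const_sub 1)).congr_deriv (by ring)

lemma hasDerivAt_logisticDensity_pow (n : ℕ) (s : ℝ) :
    HasDerivAt (fun s => logisticDensity s ^ n)
      (n * (logisticDensity s ^ n * (1 - 2 * Real.sigmoid s))) s := by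
  refine ((hasDerivAt_logisticDensity s).pow n).congr_deriv ?_
  cases n with
  | zero => simp
  | succ n =>
    rw [Nat.add_sub_cancel]
    ring

lemma sigmoid_cpow_mul_sigmoid_neg_cpow (n : ℕ) (z : ℂ) (s : ℝ) :
    (Real.sigmoid s : ℂ) ^ (n + z) * (Real.sigmoid (-s) : ℂ) ^ (n - z) =
      Complex.exp (z * s) * (logisticDensity s ^ n : ℝ) := by
  have hpos : (Real.sigmoid s : ℂ) ≠ 0 := by exact_mod_cast (Real.sigmoid_pos s).ne'
  have hneg : (Real.sigmoid (-s) : ℂ) ≠ 0 := by exact_mod_cast (Real.sigmoid_pos (-s)).ne'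
  have hratio : Real.sigmoid s = Real.sigmoid (-s) * Real.exp s := by
    simpa using (Real.sigmoid_mul_rexp_neg (-s)).symm
  have hexp : (Real.exp s : ℂ) ^ z = Complex.exp (z * s) := by
    rw [Complex.cpow_def_of_ne_zero (by exact_mod_cast (Real.exp_pos s).ne'),
      ← Complex.ofReal_log (Real.exp_pos s).le, Real.log_exp, mul_comm]
  have hcpow : (Real.sigmoid s : ℂ) ^ z =
      (Real.sigmoid (-s) : ℂ) ^ z * Complex.exp (z * s) := by
    rw [hratio, Complex.ofReal_mul, Complex.mul_cpow_ofReal_nonneg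
      (Real.sigmoid_pos _).le (Real.exp_pos _).le, hexp]
  have hne : (Real.sigmoid (-s) : ℂ) ^ z ≠ 0 := by simp [hneg]
  rw [Complex.cpow_add _ _ hpos, Complex.cpow_sub _ _ hneg, Complex.cpow_natCast,
    Complex.cpow_natCast, hcpow, logisticDensity, mul_pow]
  push_cast
  field_simp

lemma integrable_cexp_mul_logisticDensity_pow {n : ℕ} {z : ℂ} (hre : |z.re| < n) :
    Integrable fun s : ℝ => Complex.exp (z * s) * (logisticDensity s ^ n : ℝ) := by
  obtain ⟨hleft, hright⟩ := abs_lt.1 hre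
  simpa only [sigmoid_cpow_mul_sigmoid_neg_cpow] using
    integrable_sigmoid_cpow_mul_sigmoid_neg_cpow (u := n + z) (v := n - z)
      (by simp; linarith) (by simp; linarith)

lemma integral_cexp_mul_logisticDensity_pow (n : ℕ) (z : ℂ) :
    ∫ s : ℝ, Complex.exp (z * s) * (logisticDensity s ^ n : ℝ) =
      Complex.betaIntegral (n + z) (n - z) := by
  simpa only [sigmoid_cpow_mul_sigmoid_neg_cpow] using
    integral_sigmoid_cpow_mul_sigmoid_neg_cpow (n + z) (n - z)

lemma integrable_logisticDensity_pow {n : ℕ} (hn : n ≠ 0) :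
    Integrable fun s => logisticDensity s ^ n := by
  have h := integrable_cexp_mul_logisticDensity_pow (n := n) (z := 0)
    (by simpa using Nat.pos_of_ne_zero hn)
  simpa only [zero_mul, Complex.exp_zero, one_mul] using! h.re

lemma integrable_logisticDensity_pow_mul_one_sub_two_sigmoid {n : ℕ} (hn : n ≠ 0) :
    Integrable fun s => logisticDensity s ^ n * (1 - 2 * Real.sigmoid s) := by
  refine (integrable_logisticDensity_pow hn).mul_bdd (c := 1) (by fun_prop)
    (Filter.Eventually.of_forall fun s => ?_)
  rw [Real.norm_eq_abs, abs_le]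
  constructor <;> linarith [Real.sigmoid_pos s, Real.sigmoid_lt_one s]

end LogisticDensity

section Oscillatory

variable {g g' : ℝ → ℝ}

lemma integrable_sin_mul (hg : Integrable g) (a θ : ℝ) :
    Integrable fun s => Real.sin (a * s + θ) * g s :=
  hg.bdd_mul (c := 1) (by fun_prop) (Filter.Eventually.of_forall fun _ => Real.abs_sin_le_one _)

lemma integrable_cos_mul (hg : Integrable g) (a θ : ℝ) :
    Integrable fun s => Real.cos (a * s + θ) * g s :=
  hg.bdd_mul (c := 1) (by fun_prop) (Filter.Eventually.of_forall fun _ => Real.abs_cos_le_one _)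

lemma integral_sin_mul_deriv_eq (hderiv : ∀ s, HasDerivAt g (g' s) s) (hg : Integrable g)
    (hg' : Integrable g') (a θ : ℝ) :
    ∫ s, Real.sin (a * s + θ) * g' s = -a * ∫ s, Real.cos (a * s + θ) * g s := by
  have hsin (s : ℝ) :
      HasDerivAt (fun s => Real.sin (a * s + θ)) (a * Real.cos (a * s + θ)) s := by
    have hphase : HasDerivAt (fun s => a * s + θ) a s := by
      simpa using ((hasDerivAt_id s).const_mul a).add_const θ
    exact hphase.sin.congr_deriv (mul_comm _ _)
  have hcos : Integrable fun s => a * Real.cos (a * s + θ) * g s := by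
    simpa only [mul_assoc] using (integrable_cos_mul hg a θ).const_mul a
  rw [integral_mul_deriv_eq_deriv_mul_of_integrable (fun s _ => hsin s) (fun s _ => hderiv s)
    (integrable_sin_mul hg' a θ) hcos (integrable_sin_mul hg a θ)]
  simp only [mul_assoc, integral_const_mul, neg_mul]

lemma integral_cos_mul_eq_re (hg : Integrable g) (a θ : ℝ) :
    ∫ s, Real.cos (a * s + θ) * g s =
      (Complex.exp (θ * Complex.I) * ∫ s : ℝ, Complex.exp (a * Complex.I * s) * g s).re := by
  have hexp (s : ℝ) : Complex.exp (θ * Complex.I) * (Complex.exp (a * Complex.I * s) * g s) =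
      Complex.exp ((a * s + θ : ℝ) * Complex.I) * g s := by
    rw [← mul_assoc, ← Complex.exp_add]
    congr 2
    push_cast
    ring
  have hint : Integrable fun s : ℝ => Complex.exp ((a * s + θ : ℝ) * Complex.I) * g s :=
    hg.ofReal.bdd_mul (c := 1) (by fun_prop)
      (Filter.Eventually.of_forall fun s => (Complex.norm_exp_ofReal_mul_I _).le)
  rw [← integral_const_mul]
  simp only [hexp]
  refine Eq.trans (integral_congr_ae (Filter.Eventually.of_forall fun s => ?_)) (integral_re hint)
  simp only [RCLike.re_eq_complex_re, Complex.re_mul_ofReal, Complex.exp_ofReal_mul_I_re]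

end Oscillatory

section FourierTransform

open scoped Nat Real

lemma integral_cexp_mul_I_mul_logisticDensity_pow (n : ℕ) {a : ℝ} (ha : a ≠ 0) :
    ∫ s : ℝ, Complex.exp (a * Complex.I * s) * (logisticDensity s ^ (n + 1) : ℝ) =
      ((∏ k ∈ Finset.range n, (((k : ℝ) + 1) ^ 2 + a ^ 2)) / (2 * n + 1)! *
        (π * a / Real.sinh (π * a)) : ℝ) := by
  have hsin : Complex.sin (π * (a * Complex.I)) = Real.sinh (π * a) * Complex.I := by
    rw [← mul_assoc, Complex.sin_mul_I]
    push_cast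
    rfl
  have hsinh : (Real.sinh (π * a) : ℂ) ≠ 0 := by
    exact_mod_cast Real.sinh_ne_zero.2 (mul_ne_zero Real.pi_ne_zero ha)
  have hre : |(a * Complex.I).re| < (n : ℝ) + 1 := by
    simpa using (by positivity : (0 : ℝ) < n + 1)
  rw [integral_cexp_mul_logisticDensity_pow, Nat.cast_succ,
    betaIntegral_add_sub_eq_prod hre (hsin ▸ mul_ne_zero hsinh Complex.I_ne_zero), hsin]
  push_cast
  simp only [mul_pow, Complex.I_sq, mul_neg_one, sub_neg_eq_add, ← mul_assoc,
    mul_div_mul_right _ _ Complex.I_ne_zero]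

lemma integral_cos_mul_logisticDensity_pow (n : ℕ) {a : ℝ} (ha : a ≠ 0) (θ : ℝ) :
    ∫ s, Real.cos (a * s + θ) * logisticDensity s ^ (n + 1) =
      Real.cos θ * ((∏ k ∈ Finset.range n, (((k : ℝ) + 1) ^ 2 + a ^ 2)) / (2 * n + 1)! *
        (π * a / Real.sinh (π * a))) := by
  rw [integral_cos_mul_eq_re (integrable_logisticDensity_pow n.succ_ne_zero),
    integral_cexp_mul_I_mul_logisticDensity_pow n ha, Complex.re_mul_ofReal,
    Complex.exp_ofReal_mul_I_re]

end FourierTransform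

section Homoclinic

open scoped Real

/-- The homoclinic orbit `x_h` of the Helmholtz oscillator in the time variable `s = √δ t`. -/
noncomputable def homoclinicProfile (s : ℝ) : ℝ := 1 - 3 / (1 + Real.cosh s)

lemma homoclinicProfile_eq_one_sub (s : ℝ) :
    homoclinicProfile s = 1 - 6 * logisticDensity s := by
  have := Real.cosh_pos s
  rw [homoclinicProfile, logisticDensity_eq_inv_cosh]
  field_simp
  ring

lemma restoringForce_mul_deriv_homoclinicProfile (s : ℝ) :
    (homoclinicProfile s - homoclinicProfile s ^ 2) * deriv homoclinicProfile s =
      216 * (logisticDensity s ^ 3 * (1 - 2 * Real.sigmoid s)) -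
        36 * (logisticDensity s ^ 2 * (1 - 2 * Real.sigmoid s)) := by
  have hderiv : deriv homoclinicProfile s =
      -(6 * (logisticDensity s * (1 - 2 * Real.sigmoid s))) := by
    rw [funext homoclinicProfile_eq_one_sub]
    exact (((hasDerivAt_logisticDensity s).const_mul 6).const_sub 1).deriv
  rw [hderiv, homoclinicProfile_eq_one_sub]
  ring

/- Up to a constant, this primitive is `X ^ 2 / 2 - X ^ 3 / 3` evaluated along the profile; the
constant is chosen to make it integrable. -/
lemma hasDerivAt_restoringForce_primitive (s : ℝ) :
    HasDerivAt (fun s => 72 * logisticDensity s ^ 3 - 18 * logisticDensity s ^ 2)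
      ((homoclinicProfile s - homoclinicProfile s ^ 2) * deriv homoclinicProfile s) s := by
  refine (((hasDerivAt_logisticDensity_pow 3 s).const_mul 72).sub
    ((hasDerivAt_logisticDensity_pow 2 s).const_mul 18)).congr_deriv ?_
  rw [restoringForce_mul_deriv_homoclinicProfile]
  push_cast
  ring

lemma integrable_restoringForce_mul_deriv_homoclinicProfile :
    Integrable fun s =>
      (homoclinicProfile s - homoclinicProfile s ^ 2) * deriv homoclinicProfile s := by
  simp only [restoringForce_mul_deriv_homoclinicProfile]
  exact ((integrable_logisticDensity_pow_mul_one_sub_two_sigmoid three_ne_zero).const_mul 216).sub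
    ((integrable_logisticDensity_pow_mul_one_sub_two_sigmoid two_ne_zero).const_mul 36)

lemma integral_cos_mul_restoringForce_primitive {a : ℝ} (ha : a ≠ 0) (θ : ℝ) :
    ∫ s, Real.cos (a * s + θ) * (72 * logisticDensity s ^ 3 - 18 * logisticDensity s ^ 2) =
      -(3 * π / 5) * a * (1 - a ^ 4) * Real.cos θ / Real.sinh (π * a) := by
  have hcube := integrable_cos_mul (integrable_logisticDensity_pow three_ne_zero) a θ
  have hsq := integrable_cos_mul (integrable_logisticDensity_pow two_ne_zero) a θ
  simp only [mul_sub (Real.cos _), mul_left_comm (Real.cos _)]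
  rw [integral_sub (hcube.const_mul 72) (hsq.const_mul 18), integral_const_mul,
    integral_const_mul, integral_cos_mul_logisticDensity_pow 2 ha,
    integral_cos_mul_logisticDensity_pow 1 ha]
  simp only [Finset.prod_range_succ, Finset.prod_range_zero, Nat.factorial]
  push_cast
  ring

lemma integral_sin_mul_restoringForce_mul_deriv {a : ℝ} (ha : a ≠ 0) (θ : ℝ) :
    ∫ s, Real.sin (a * s + θ) *
        ((homoclinicProfile s - homoclinicProfile s ^ 2) * deriv homoclinicProfile s) =
      3 * π / 5 * a ^ 2 * (1 - a ^ 4) * Real.cos θ / Real.sinh (π * a) := by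
  have hprimitive : Integrable fun s => 72 * logisticDensity s ^ 3 - 18 * logisticDensity s ^ 2 :=
    ((integrable_logisticDensity_pow three_ne_zero).const_mul 72).sub
      ((integrable_logisticDensity_pow two_ne_zero).const_mul 18)
  rw [integral_sin_mul_deriv_eq hasDerivAt_restoringForce_primitive hprimitive
    integrable_restoringForce_mul_deriv_homoclinicProfile,
    integral_cos_mul_restoringForce_primitive ha]
  ring

end Homoclinic

/-- For every δ > 0, ω > 0 and t₀ ∈ ℝ, the function
`t ↦ sin(ω(t+t₀))·(x_h(t) − x_h(t)²)·x_h'(t)` is integrable on ℝ and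
`∫ ... dt = (3π/5)·ω²·(δ² − ω⁴)·cos(ω t₀)/(δ³·sinh(πω/√δ))`. -/
theorem helmholtz_restoring_modulation_integral (δ ω : ℝ) (hδ : 0 < δ) (hω : 0 < ω)
    (t₀ : ℝ) (x : ℝ → ℝ)
    (hx : ∀ t : ℝ, x t = 1 - 3 / (1 + Real.cosh (Real.sqrt δ * t))) :
    Integrable (fun t : ℝ => Real.sin (ω * (t + t₀)) * (x t - (x t) ^ 2) * deriv x t) ∧
    ∫ t : ℝ, Real.sin (ω * (t + t₀)) * (x t - (x t) ^ 2) * deriv x t =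
      (3 * Real.pi / 5) * ω ^ 2 * (δ ^ 2 - ω ^ 4) * Real.cos (ω * t₀) /
        (δ ^ 3 * Real.sinh (Real.pi * ω / Real.sqrt δ)) := by
  set r := Real.sqrt δ
  have hr : 0 < r := Real.sqrt_pos.2 hδ
  have hδr : δ = r ^ 2 := (Real.sq_sqrt hδ.le).symm
  let F : ℝ → ℝ := fun s => Real.sin (ω / r * s + ω * t₀) *
    ((homoclinicProfile s - homoclinicProfile s ^ 2) * deriv homoclinicProfile s)
  have hF : Integrable F :=
    integrable_sin_mul integrable_restoringForce_mul_deriv_homoclinicProfile _ _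
  have hrescale (t : ℝ) :
      Real.sin (ω * (t + t₀)) * (x t - (x t) ^ 2) * deriv x t = r * F (r * t) := by
    have hphase : ω / r * (r * t) + ω * t₀ = ω * (t + t₀) := by field_simp
    have hxr : x = fun t => homoclinicProfile (r * t) := funext hx
    rw [hxr, deriv_comp_mul_left, smul_eq_mul, ← hphase]
    ring
  simp only [hrescale]
  refine ⟨(hF.comp_mul_left' hr.ne').const_mul r, ?_⟩
  rw [integral_const_mul, Measure.integral_comp_mul_left, abs_of_pos (inv_pos.2 hr), smul_eq_mul,
    mul_inv_cancel_left₀ hr.ne', integral_sin_mul_restoringForce_mul_deriv (div_pos hω hr).ne',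
    ← mul_div_assoc Real.pi, hδr]
  field_simp
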